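/- arXiv:1702.06714 — 4 statements merged into one kernel-verified Lean document; each statement's English description precedes it below -/
import Mathlib

section
/- Let μ ∈ ℝ with μ ≠ 0, and let c, c₁, c₂, c₁₁, c₁₂, c₂₂ ∈ ℝ with c ≠ 0, c₁ ≠ 0, c₂ ≠ 0. Then there exist an open neighborhood O of 0 in ℝ² and a real-analytic function φ : O → ℝ with ∂₁φ ≠ 0 and ∂₂φ ≠ 0 on O, satisfying the partial differential equation 0 = (1/2) μ φ (φ₁₂₂/φ₂ + φ₁₁₂/φ₁) + φ₁₂ (1 − (1/2) μ φ (φ₂₂/φ₂² + φ₁₁/φ₁²)) on O, and whose 2-jet at 0 is the prescribed data: φ(0) = c, ∂₁φ(0) = c₁, ∂₂φ(0) = c₂, ∂₁²φ(0) = c₁₁, ∂₁∂₂φ(0) = c₁₂, ∂₂²φ(0) = c₂₂. -/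
/-!
Since `φ₁₂₂/φ₂ - φ₁₂ φ₂₂/φ₂² = ∂₁∂₂ log φ₂`, and likewise for `φ₁`, the equation is
`φ₁₂ + ½ μ φ ∂₁∂₂ log (φ₁ φ₂) = 0`, which is invariant under separate reparametrisations
`x₁ ↦ X(x₁)`, `x₂ ↦ Y(x₂)`. It therefore suffices to look for solutions
`φ(x) = h (X(x₁) + Y(x₂))`, where `h` solves `h'' + μ h (log h')'' = 0`. The pure second
derivatives and the sizes of the first derivatives at `0` are adjusted through quadratic
polynomials `X` and `Y`; the only remaining datum is `h''(0) / h'(0)² = c₁₂ / (c₁ c₂)`.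

The ODE for `h` is solved by quadratures. If `h' = P(h)`, it becomes `P' + μ s P'' = 0`,
so `P'(s) = k (s / c) ^ (-1/μ)`; then `h` is the local inverse of a primitive of `1 / P`.
Both primitives are analytic by `exists_analyticAt_primitive`, and the local inverse
is analytic by the analytic inverse function theorem, so no Cauchy–Kovalevskaya theorem is needed.
-/

open scoped ContDiff

/-- Partial derivative `∂_i f` in coordinates on `ℝⁿ`. -/
noncomputable def pd {n : ℕ} (i : Fin n) (f : (Fin n → ℝ) → ℝ) : (Fin n → ℝ) → ℝ :=
  fun x => fderiv ℝ f x (Pi.single i 1)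

/-- Hessian `(Hess_h)_{ij} = ∂_i∂_j h − Σ_k Γ_{ij}^k ∂_k h` of `h` w.r.t. the connection `Γ`. -/
noncomputable def hessD {n : ℕ} (Γ : Fin n → Fin n → Fin n → (Fin n → ℝ) → ℝ)
    (h : (Fin n → ℝ) → ℝ) (i j : Fin n) : (Fin n → ℝ) → ℝ :=
  fun x => pd i (pd j h) x - ∑ k, Γ i j k x * pd k h x

/-- Ricci tensor
`ρ_{ij} = Σ_k (∂_k Γ_{ij}^k − ∂_i Γ_{kj}^k) + Σ_{k,l} (Γ_{kl}^k Γ_{ij}^l − Γ_{il}^k Γ_{kj}^l)`. -/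
noncomputable def ricciD {n : ℕ} (Γ : Fin n → Fin n → Fin n → (Fin n → ℝ) → ℝ)
    (i j : Fin n) : (Fin n → ℝ) → ℝ :=
  fun x => (∑ k, (pd k (Γ i j k) x - pd i (Γ k j k) x))
    + ∑ k, ∑ l, (Γ k l k x * Γ i j l x - Γ i l k x * Γ k j l x)

/-- Symmetrized Ricci tensor `(ρ_s)_{ij} = (ρ_{ij} + ρ_{ji})/2`. -/
noncomputable def ricciSymD {n : ℕ} (Γ : Fin n → Fin n → Fin n → (Fin n → ℝ) → ℝ)
    (i j : Fin n) : (Fin n → ℝ) → ℝ :=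
  fun x => (ricciD Γ i j x + ricciD Γ j i x) / 2

open Filter Topology

/-! ### Real-analytic primitives -/

/-- A real-analytic germ extends to a complex-analytic germ: use the same Taylor coefficients. -/
lemma exists_complex_extension {f : ℝ → ℝ} {c : ℝ} (hf : AnalyticAt ℝ f c) :
    ∃ g : ℂ → ℂ, AnalyticAt ℂ g (c : ℂ) ∧ ∀ᶠ s : ℝ in 𝓝 c, g (s : ℂ) = ((f s : ℝ) : ℂ) := by
  obtain ⟨p, r, hp⟩ := hf
  set q : FormalMultilinearSeries ℂ ℂ ℂ :=
    FormalMultilinearSeries.ofScalars ℂ (fun n => (p.coeff n : ℂ)) with hq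
  have hnorm : ∀ n, ‖q n‖ = ‖p n‖ := by
    intro n
    rw [hq, FormalMultilinearSeries.ofScalars_norm, Complex.norm_real,
      FormalMultilinearSeries.norm_apply_eq_norm_coef]
  have hrad : q.radius = p.radius := by
    simp only [FormalMultilinearSeries.radius, hnorm]
  have hpos : 0 < q.radius := hrad ▸ hp.r_pos.trans_le hp.r_le
  have hqs := q.hasFPowerSeriesOnBall hpos
  refine ⟨fun z => q.sum (z - c), ?_, ?_⟩
  · have h0 : AnalyticAt ℂ q.sum ((c : ℂ) - c) := by
      rw [sub_self]; exact hqs.analyticAt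
    exact h0.comp (f := fun z : ℂ => z - c) (by fun_prop)
  · have hball : ∀ᶠ s in 𝓝 c, s ∈ Metric.eball c r := Metric.eball_mem_nhds c hp.r_pos
    filter_upwards [hball] with s hs
    have h1 := hp.hasSum_sub hs
    have h2 : HasSum (fun n => (((p n) fun _ => s - c : ℝ) : ℂ)) (f s : ℂ) :=
      Complex.hasSum_ofReal.2 h1
    rw [FormalMultilinearSeries.sum, ← h2.tsum_eq]
    refine tsum_congr fun n => ?_
    rw [hq, FormalMultilinearSeries.ofScalars_apply_eq,
      FormalMultilinearSeries.apply_eq_pow_smul_coeff]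
    push_cast [smul_eq_mul]
    ring

/-- A real-analytic germ has a real-analytic primitive: the real part of a holomorphic primitive
of a complex extension. -/
lemma exists_analyticAt_primitive {f : ℝ → ℝ} {c : ℝ} (hf : AnalyticAt ℝ f c) (v : ℝ) :
    ∃ F : ℝ → ℝ, AnalyticAt ℝ F c ∧ F c = v ∧ ∀ᶠ s in 𝓝 c, HasDerivAt F (f s) s := by
  obtain ⟨g, hg, hgf⟩ := exists_complex_extension hf
  obtain ⟨r, hr, hgr⟩ := Metric.eventually_nhds_iff_ball.1 hg.eventually_analyticAt
  obtain ⟨G, hG⟩ := DifferentiableOn.isExactOn_ball (f := g) (c := (c : ℂ)) (r := r)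
    fun z hz => (hgr z hz).differentiableAt.differentiableWithinAt
  have hGa : AnalyticAt ℂ G (c : ℂ) := by
    refine DifferentiableOn.analyticAt (s := Metric.ball (c : ℂ) r) ?_ (Metric.ball_mem_nhds _ hr)
    exact fun z hz => (hG z hz).differentiableAt.differentiableWithinAt
  have hball : ∀ᶠ s : ℝ in 𝓝 c, (s : ℂ) ∈ Metric.ball (c : ℂ) r :=
    Complex.continuous_ofReal.continuousAt.eventually (Metric.ball_mem_nhds _ hr)
  refine ⟨fun s => (G s).re + (v - (G c).re), hGa.re_ofReal.add analyticAt_const, by ring, ?_⟩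
  filter_upwards [hball, hgf] with s hs hsf
  have := (hG s hs).real_of_complex
  rw [hsf, Complex.ofReal_re] at this
  exact this.add_const _

/-! ### The ordinary differential equation -/

/-- An autonomous analytic scalar ODE `h' = P(h)`, `h 0 = c` with `P c ≠ 0` has an analytic
solution, the local inverse of a primitive of `1 / P`. -/
lemma exists_autonomous_solution {P : ℝ → ℝ} {c : ℝ} (hP : AnalyticAt ℝ P c) (hPc : P c ≠ 0) :
    ∃ h : ℝ → ℝ, AnalyticAt ℝ h 0 ∧ h 0 = c ∧ ∀ᶠ t in 𝓝 0, HasDerivAt h (P (h t)) t := by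
  obtain ⟨F, hF, hFc, hF'⟩ := exists_analyticAt_primitive (hP.inv hPc) 0
  have hd : deriv F c ≠ 0 := by
    rw [hF'.self_of_nhds.deriv]; exact inv_ne_zero hPc
  have hs := hF.hasStrictDerivAt
  have ha := hF.analyticAt_localInverse hd
  have hr := hs.eventually_right_inverse hd
  have hl := (hs.eventually_left_inverse hd).self_of_nhds
  set h := hs.localInverse F (deriv F c) c hd
  rw [hFc] at ha hr hl
  refine ⟨h, ha, hl, ?_⟩
  have hcont : Tendsto h (𝓝 0) (𝓝 c) := by
    have := ha.continuousAt.tendsto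
    rwa [hl] at this
  have hPne : ∀ᶠ s in 𝓝 c, P s ≠ 0 := hP.continuousAt.eventually_ne hPc
  filter_upwards [hcont.eventually hF', hcont.eventually hPne, hr.eventually_nhds,
    ha.eventually_analyticAt] with t h1 h2 h3 h4
  have h5 := HasDerivAt.of_local_left_inverse h4.continuousAt h1 (inv_ne_zero h2) h3
  simpa using h5

/-- Analytic local solutions of `h'' + μ h (log h')'' = 0` (with denominators cleared), with
`h(0) = c`, `h'(0) = 1`, `h''(0) = k`; `h1`, `h2`, `h3` are the successive derivatives. -/
lemma exists_ode_solution {μ c : ℝ} (hμ : μ ≠ 0) (hc : c ≠ 0) (k : ℝ) :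
    ∃ h h1 h2 h3 : ℝ → ℝ, AnalyticAt ℝ h 0 ∧ h 0 = c ∧ h1 0 = 1 ∧ h2 0 = k ∧
      ∀ᶠ t in 𝓝 0, HasDerivAt h (h1 t) t ∧ HasDerivAt h1 (h2 t) t ∧ HasDerivAt h2 (h3 t) t ∧
        h1 t ≠ 0 ∧ μ * h t * (h3 t * h1 t - h2 t ^ 2) + h2 t * h1 t ^ 2 = 0 := by
  set R : ℝ → ℝ := fun s => k * Real.exp (-(1 / μ) * Real.log (s / c)) with hR
  have hRa : AnalyticAt ℝ R c := by
    have h1 : AnalyticAt ℝ (fun s : ℝ => Real.log (s / c)) c :=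
      (analyticAt_id.div analyticAt_const hc).log (by simp [hc])
    exact analyticAt_const.mul (analyticAt_const.mul h1).rexp
  have hRd : ∀ᶠ s in 𝓝 c, s ≠ 0 ∧ HasDerivAt R (-(R s) / (μ * s)) s := by
    filter_upwards [eventually_ne_nhds hc] with s hs
    refine ⟨hs, ?_⟩
    have h1 : HasDerivAt (fun s : ℝ => Real.log (s / c)) (1 / c / (s / c)) s :=
      ((hasDerivAt_id s).div_const c).log (div_ne_zero hs hc)
    have h2 := ((h1.const_mul (-(1 / μ))).exp).const_mul k
    refine h2.congr_deriv ?_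
    simp only [hR]
    field_simp
  obtain ⟨P, hPa, hPc, hPd⟩ := exists_analyticAt_primitive hRa 1
  have hPne : P c ≠ 0 := by simp [hPc]
  obtain ⟨h, ha, h0, hd⟩ := exists_autonomous_solution hPa hPne
  have hcont : Tendsto h (𝓝 0) (𝓝 c) := by
    have := ha.continuousAt.tendsto
    rwa [h0] at this
  -- The chain rule with `P' = R` and `R'(s) = -R(s) / (μ s)` gives the derivatives of `h' = P(h)`.
  refine ⟨h, fun t => P (h t), fun t => R (h t) * P (h t),
    fun t => (-(R (h t)) / (μ * h t) * P (h t)) * P (h t) + R (h t) * (R (h t) * P (h t)),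
    ha, h0, by simp [h0, hPc], by simp [h0, hPc, hR, hc], ?_⟩
  filter_upwards [hd, hcont.eventually hRd, hcont.eventually hPd,
    hcont.eventually (hPa.continuousAt.eventually_ne hPne)] with t h1 h2 h3 h4
  have hP' : HasDerivAt (fun t => P (h t)) (R (h t) * P (h t)) t := h3.comp t h1
  have hR' : HasDerivAt (fun t => R (h t)) (-(R (h t)) / (μ * h t) * P (h t)) t := h2.2.comp t h1
  refine ⟨h1, hP', hR'.mul hP', h4, ?_⟩
  have := h2.1
  field_simp
  ring

/-! ### Partial derivatives in the plane -/

/-- `f` is differentiable at `x` with gradient `(a, b)`. -/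
def HasGrad (f : (Fin 2 → ℝ) → ℝ) (a b : ℝ) (x : Fin 2 → ℝ) : Prop :=
  HasFDerivAt f (a • (ContinuousLinearMap.proj 0 : (Fin 2 → ℝ) →L[ℝ] ℝ) +
    b • (ContinuousLinearMap.proj 1 : (Fin 2 → ℝ) →L[ℝ] ℝ)) x

namespace HasGrad

variable {f g : (Fin 2 → ℝ) → ℝ} {a b a' b' : ℝ} {x : Fin 2 → ℝ}

lemma pd_zero (h : HasGrad f a b x) : pd 0 f x = a := by
  simp [pd, HasFDerivAt.fderiv h]

lemma pd_one (h : HasGrad f a b x) : pd 1 f x = b := by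
  simp [pd, HasFDerivAt.fderiv h]

lemma add (hf : HasGrad f a b x) (hg : HasGrad g a' b' x) :
    HasGrad (fun y => f y + g y) (a + a') (b + b') x := by
  refine (HasFDerivAt.add hf hg).congr_fderiv ?_
  ext v
  simp
  ring

lemma mul (hf : HasGrad f a b x) (hg : HasGrad g a' b' x) :
    HasGrad (fun y => f y * g y) (a * g x + f x * a') (b * g x + f x * b') x := by
  refine (HasFDerivAt.mul hf hg).congr_fderiv ?_
  ext v
  simp
  ring

lemma comp {H : ℝ → ℝ} {H' : ℝ} (hH : HasDerivAt H H' (f x)) (hf : HasGrad f a b x) :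
    HasGrad (fun y => H (f y)) (H' * a) (H' * b) x := by
  refine (hH.comp_hasFDerivAt x hf).congr_fderiv ?_
  ext v
  simp
  ring

lemma coord_zero (x : Fin 2 → ℝ) : HasGrad (fun y => y 0) 1 0 x := by
  simpa [HasGrad] using hasFDerivAt_apply (𝕜 := ℝ) (0 : Fin 2) x

lemma coord_one (x : Fin 2 → ℝ) : HasGrad (fun y => y 1) 0 1 x := by
  simpa [HasGrad] using hasFDerivAt_apply (𝕜 := ℝ) (1 : Fin 2) x

lemma const (r : ℝ) (x : Fin 2 → ℝ) : HasGrad (fun _ => r) 0 0 x := by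
  simpa [HasGrad] using hasFDerivAt_const (𝕜 := ℝ) r x

lemma congr_grad (h : HasGrad f a b x) (ha : a = a') (hb : b = b') : HasGrad f a' b' x :=
  ha ▸ hb ▸ h

end HasGrad

/-- Partial derivatives of a germ, computed on any representative of the germ. -/
lemma pd_eventuallyEq {f g a b : (Fin 2 → ℝ) → ℝ} {x : Fin 2 → ℝ} (hfg : f =ᶠ[𝓝 x] g)
    (hg : ∀ᶠ y in 𝓝 x, HasGrad g (a y) (b y) y) :
    pd 0 f =ᶠ[𝓝 x] a ∧ pd 1 f =ᶠ[𝓝 x] b := by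
  have hfg' : ∀ᶠ y in 𝓝 x, HasGrad f (a y) (b y) y := by
    filter_upwards [hfg.eventuallyEq_nhds, hg] with y h1 h2
    exact HasFDerivAt.congr_of_eventuallyEq h2 h1
  exact ⟨hfg'.mono fun y h => h.pd_zero, hfg'.mono fun y h => h.pd_one⟩

/-- (Cauchy–Kovalevskaya construction) given `μ ≠ 0` and any prescribed
2-jet `(c, c₁, c₂, c₁₁, c₁₂, c₂₂)` with `c ≠ 0`, `c₁ ≠ 0`, `c₂ ≠ 0`, there is a
real-analytic function `φ` near `0 ∈ ℝ²` with nonvanishing first partials which solves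
`0 = ½ μ φ (φ₁₂₂/φ₂ + φ₁₁₂/φ₁) + φ₁₂ (1 − ½ μ φ (φ₂₂/φ₂² + φ₁₁/φ₁²))` and has the
prescribed 2-jet at `0`. -/
theorem statement16 (μ : ℝ) (hμ : μ ≠ 0)
    (c c1 c2 c11 c12 c22 : ℝ) (hc : c ≠ 0) (hc1 : c1 ≠ 0) (hc2 : c2 ≠ 0) :
    ∃ (O : Set (Fin 2 → ℝ)) (φ : (Fin 2 → ℝ) → ℝ),
      IsOpen O ∧ (0 : Fin 2 → ℝ) ∈ O ∧ AnalyticOnNhd ℝ φ O ∧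
      (∀ x ∈ O, pd 0 φ x ≠ 0) ∧ (∀ x ∈ O, pd 1 φ x ≠ 0) ∧
      (∀ x ∈ O, 0 = (1 / 2) * μ * φ x
          * (pd 1 (pd 1 (pd 0 φ)) x / pd 1 φ x + pd 1 (pd 0 (pd 0 φ)) x / pd 0 φ x)
        + pd 1 (pd 0 φ) x * (1 - (1 / 2) * μ * φ x
          * (pd 1 (pd 1 φ) x / (pd 1 φ x) ^ 2 + pd 0 (pd 0 φ) x / (pd 0 φ x) ^ 2))) ∧
      φ (0 : Fin 2 → ℝ) = c ∧
      pd 0 φ (0 : Fin 2 → ℝ) = c1 ∧ pd 1 φ (0 : Fin 2 → ℝ) = c2 ∧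
      pd 0 (pd 0 φ) (0 : Fin 2 → ℝ) = c11 ∧ pd 1 (pd 0 φ) (0 : Fin 2 → ℝ) = c12 ∧
      pd 1 (pd 1 φ) (0 : Fin 2 → ℝ) = c22 := by
  obtain ⟨h, h1, h2, h3, ha, h00, h10, h20, hev⟩ :=
    exists_ode_solution hμ hc (c12 / (c1 * c2))
  set k := c12 / (c1 * c2) with hk
  -- `β`, `δ` correct the pure second derivatives: `c11 = h''(0) c1² + 2 h'(0) β`, likewise `c22`.
  obtain ⟨β, hβ⟩ : ∃ β : ℝ, k * c1 ^ 2 + 2 * β = c11 := ⟨(c11 - k * c1 ^ 2) / 2, by ring⟩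
  obtain ⟨δ, hδ⟩ : ∃ δ : ℝ, k * c2 ^ 2 + 2 * δ = c22 := ⟨(c22 - k * c2 ^ 2) / 2, by ring⟩
  set X : (Fin 2 → ℝ) → ℝ := fun x => c1 + 2 * β * x 0 with hX
  set Y : (Fin 2 → ℝ) → ℝ := fun x => c2 + 2 * δ * x 1 with hY
  set u : (Fin 2 → ℝ) → ℝ :=
    fun x => (c1 * x 0 + β * (x 0 * x 0)) + (c2 * x 1 + δ * (x 1 * x 1)) with hu
  have gX : ∀ x, HasGrad X (2 * β) 0 x := fun x =>
    ((HasGrad.const c1 x).add ((HasGrad.const (2 * β) x).mul (.coord_zero x))).congr_grad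
      (by ring) (by ring)
  have gY : ∀ x, HasGrad Y 0 (2 * δ) x := fun x =>
    ((HasGrad.const c2 x).add ((HasGrad.const (2 * δ) x).mul (.coord_one x))).congr_grad
      (by ring) (by ring)
  have gu : ∀ x, HasGrad u (X x) (Y x) x := fun x =>
    ((((HasGrad.const c1 x).mul (.coord_zero x)).add
      ((HasGrad.const β x).mul ((HasGrad.coord_zero x).mul (.coord_zero x)))).add
    (((HasGrad.const c2 x).mul (.coord_one x)).add
      ((HasGrad.const δ x).mul ((HasGrad.coord_one x).mul (.coord_one x))))).congr_grad
      (by simp only [hX]; ring) (by simp only [hY]; ring)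
  have hu0 : u 0 = 0 := by simp [hu]
  have hX0 : X 0 = c1 := by simp [hX]
  have hY0 : Y 0 = c2 := by simp [hY]
  have hut : Tendsto u (𝓝 0) (𝓝 0) := by
    have : ContinuousAt u 0 := HasFDerivAt.continuousAt (gu 0)
    simpa only [ContinuousAt, hu0] using this
  have hXne : ∀ᶠ x in 𝓝 0, X x ≠ 0 :=
    (HasFDerivAt.continuousAt (gX 0)).eventually_ne (by rwa [hX0])
  have hYne : ∀ᶠ x in 𝓝 0, Y x ≠ 0 :=
    (HasFDerivAt.continuousAt (gY 0)).eventually_ne (by rwa [hY0])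
  have E := hut.eventually hev
  set φ : (Fin 2 → ℝ) → ℝ := fun x => h (u x) with hφ
  have hua : AnalyticAt ℝ u 0 := by
    have p0 : AnalyticAt ℝ (fun x : Fin 2 → ℝ => x 0) 0 :=
      (ContinuousLinearMap.proj 0 : (Fin 2 → ℝ) →L[ℝ] ℝ).analyticAt 0
    have p1 : AnalyticAt ℝ (fun x : Fin 2 → ℝ => x 1) 0 :=
      (ContinuousLinearMap.proj 1 : (Fin 2 → ℝ) →L[ℝ] ℝ).analyticAt 0
    exact ((analyticAt_const.mul p0).add (analyticAt_const.mul (p0.mul p0))).add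
      ((analyticAt_const.mul p1).add (analyticAt_const.mul (p1.mul p1)))
  have hφa : AnalyticAt ℝ φ 0 := by
    have : AnalyticAt ℝ h (u 0) := by rwa [hu0]
    exact this.comp hua
  obtain ⟨d0, d1⟩ := pd_eventuallyEq (f := φ) (g := φ) (x := 0)
    (a := fun x => h1 (u x) * X x) (b := fun x => h1 (u x) * Y x) EventuallyEq.rfl
    (E.mono fun x e => (gu x).comp e.1)
  obtain ⟨d00, d10⟩ := pd_eventuallyEq
    (a := fun x => h2 (u x) * (X x * X x) + h1 (u x) * (2 * β))
    (b := fun x => h2 (u x) * (X x * Y x)) d0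
    (E.mono fun x e => (((gu x).comp e.2.1).mul (gX x)).congr_grad (by ring) (by ring))
  obtain ⟨-, d11⟩ := pd_eventuallyEq
    (a := fun x => h2 (u x) * (X x * Y x))
    (b := fun x => h2 (u x) * (Y x * Y x) + h1 (u x) * (2 * δ)) d1
    (E.mono fun x e => (((gu x).comp e.2.1).mul (gY x)).congr_grad (by ring) (by ring))
  obtain ⟨-, d110⟩ := pd_eventuallyEq
    (a := fun x => h3 (u x) * (X x ^ 2 * Y x) + h2 (u x) * (2 * β * Y x))
    (b := fun x => h3 (u x) * (X x * Y x ^ 2) + h2 (u x) * (X x * (2 * δ))) d10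
    (E.mono fun x e => (((gu x).comp e.2.2.1).mul ((gX x).mul (gY x))).congr_grad
      (by ring) (by ring))
  obtain ⟨-, d100⟩ := pd_eventuallyEq
    (a := fun x => h3 (u x) * X x ^ 3 + h2 (u x) * (X x * (6 * β)))
    (b := fun x => h3 (u x) * (X x ^ 2 * Y x) + h2 (u x) * (Y x * (2 * β))) d00
    (E.mono fun x e => ((((gu x).comp e.2.2.1).mul ((gX x).mul (gX x))).add
      (((gu x).comp e.2.1).mul (HasGrad.const (2 * β) x))).congr_grad (by ring) (by ring))
  have hall : ∀ᶠ x in 𝓝 (0 : Fin 2 → ℝ), AnalyticAt ℝ φ x ∧ pd 0 φ x ≠ 0 ∧ pd 1 φ x ≠ 0 ∧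
      0 = (1 / 2) * μ * φ x
          * (pd 1 (pd 1 (pd 0 φ)) x / pd 1 φ x + pd 1 (pd 0 (pd 0 φ)) x / pd 0 φ x)
        + pd 1 (pd 0 φ) x * (1 - (1 / 2) * μ * φ x
          * (pd 1 (pd 1 φ) x / (pd 1 φ x) ^ 2 + pd 0 (pd 0 φ) x / (pd 0 φ x) ^ 2)) := by
    filter_upwards [hφa.eventually_analyticAt, E, hXne, hYne, d0, d1, d00, d10, d11, d110, d100]
      with x e0 e1 hx hy e2 e3 e4 e5 e6 e7 e8
    obtain ⟨-, -, -, hh1, hode⟩ := e1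
    rw [e2, e3, e4, e5, e6, e7, e8]
    refine ⟨e0, mul_ne_zero hh1 hx, mul_ne_zero hh1 hy, ?_⟩
    have hφx : φ x = h (u x) := rfl
    rw [hφx]
    field_simp
    linear_combination (-2 * X x ^ 2 * Y x ^ 2) * hode
  obtain ⟨O, hO, hOo, hO0⟩ := eventually_nhds_iff.1 hall
  refine ⟨O, φ, hOo, hO0, fun x hx => (hO x hx).1, fun x hx => (hO x hx).2.1,
    fun x hx => (hO x hx).2.2.1, fun x hx => (hO x hx).2.2.2, ?_, ?_, ?_, ?_, ?_, ?_⟩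
  · simp only [hφ, hu0, h00]
  · simp only [d0.self_of_nhds, hu0, h10, hX0, one_mul]
  · simp only [d1.self_of_nhds, hu0, h10, hY0, one_mul]
  · simp only [d00.self_of_nhds, hu0, h10, h20, hX0, ← hβ]; ring
  · simp only [d10.self_of_nhds, hu0, h20, hX0, hY0, hk]; field_simp
  · simp only [d11.self_of_nhds, hu0, h10, h20, hY0, ← hδ]; ring
end

section
/- Let μ ∈ ℝ with μ ≠ 0, let I ⊆ ℝ be an open interval, and let γ : I → ℝ be a smooth function with γ(t) ≠ 0 and γ'(t) ≠ 0 for all t ∈ I. Define φ(x¹,x²) = γ(x¹+x²) on the open set O = {(x¹,x²) ∈ ℝ² : x¹+x² ∈ I}. Then φ satisfies the partial differential equation 0 = (1/2) μ φ (φ₁₂₂/φ₂ + φ₁₁₂/φ₁) + φ₁₂ (1 − (1/2) μ φ (φ₂₂/φ₂² + φ₁₁/φ₁²)) on O if and only if γ satisfies the ordinary differential equation μ γ γ' γ''' + (γ')² γ'' − μ γ (γ'')² = 0 on I, i.e. γ''' = −((γ')² γ'' − μ γ (γ'')²)/(μ γ γ'). -/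
/-!
Every partial derivative of a ridge function `x ↦ g (x 0 + x 1)` is the ridge function of `g'`
(`pd_ridge`), so the PDE at `x` is a relation between `γ, γ', γ'', γ'''` at `t = x 0 + x 1`,
namely `0 = μ γ γ''' / γ' + γ'' (1 - μ γ γ'' / (γ')²)`. Clearing the nonvanishing denominators
gives the ODE (`ridge_pde_iff_ode`), and every `t ∈ I` is of the form `x 0 + x 1`.
-/

open scoped ContDiff

/-- The chain rule for a ridge function. No differentiability of `g` is needed: `g` is
differentiable at `x 0 + x 1` exactly when the ridge function is differentiable at `x`, and
otherwise both sides take the default value `0`. -/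
lemma pd_ridge (i : Fin 2) (g : ℝ → ℝ) :
    pd i (fun x : Fin 2 → ℝ => g (x 0 + x 1)) = fun x => deriv g (x 0 + x 1) := by
  funext x
  unfold pd
  have hL : HasFDerivAt (fun y : Fin 2 → ℝ => y 0 + y 1)
      (ContinuousLinearMap.proj (R := ℝ) (φ := fun _ : Fin 2 => ℝ) 0
        + ContinuousLinearMap.proj (R := ℝ) (φ := fun _ : Fin 2 => ℝ) 1) x :=
    (hasFDerivAt_apply 0 x).add (hasFDerivAt_apply 1 x)
  by_cases hg : DifferentiableAt ℝ g (x 0 + x 1)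
  · have h := hg.hasDerivAt.comp_hasFDerivAt x hL
    have h' : HasFDerivAt (fun y : Fin 2 → ℝ => g (y 0 + y 1)) _ x := h
    rw [h'.fderiv]
    fin_cases i <;> simp
  · have hn : ¬ DifferentiableAt ℝ (fun y : Fin 2 → ℝ => g (y 0 + y 1)) x := by
      intro hd
      apply hg
      -- `t ↦ (t - x 1, x 1)` is a section of `y ↦ y 0 + y 1` through `x`
      have hs : DifferentiableAt ℝ (fun t : ℝ => (![t - x 1, x 1] : Fin 2 → ℝ)) (x 0 + x 1) := by
        rw [differentiableAt_pi]
        intro j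
        fin_cases j <;> simp
      have hx : (![x 0 + x 1 - x 1, x 1] : Fin 2 → ℝ) = x := by
        ext j
        fin_cases j <;> simp
      have hc := DifferentiableAt.comp (x 0 + x 1)
        (g := fun y : Fin 2 → ℝ => g (y 0 + y 1)) (by rw [hx]; exact hd) hs
      simpa [Function.comp_def] using hc
    rw [fderiv_zero_of_not_differentiableAt hn, deriv_zero_of_not_differentiableAt hg]
    simp

/-- The PDE for a ridge function and the ODE, at one point: `a, b, c, d` stand for
`γ, γ', γ'', γ'''`. -/
lemma ridge_pde_iff_ode {μ a b c d : ℝ} (hμ : μ ≠ 0) (ha : a ≠ 0) (hb : b ≠ 0) :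
    0 = (1 / 2) * μ * a * (d / b + d / b)
        + c * (1 - (1 / 2) * μ * a * (c / b ^ 2 + c / b ^ 2))
    ↔ d = -((b ^ 2 * c - μ * a * c ^ 2) / (μ * a * b)) := by
  have hne : μ * a * b ≠ 0 := mul_ne_zero (mul_ne_zero hμ ha) hb
  have hpde : (1 / 2) * μ * a * (d / b + d / b)
        + c * (1 - (1 / 2) * μ * a * (c / b ^ 2 + c / b ^ 2))
      = (d * (μ * a * b) + (b ^ 2 * c - μ * a * c ^ 2)) / b ^ 2 := by
    field_simp
    ring
  rw [hpde, eq_comm, div_eq_zero_iff, or_iff_left (pow_ne_zero 2 hb), ← neg_div,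
    eq_div_iff hne, eq_neg_iff_add_eq_zero]

/-- for `φ(x¹,x²) = γ(x¹+x²)` with `γ`, `γ'` nonvanishing on an open
interval `I`, the PDE `0 = ½ μ φ (φ₁₂₂/φ₂ + φ₁₁₂/φ₁) + φ₁₂ (1 − ½ μ φ (φ₂₂/φ₂² + φ₁₁/φ₁²))`
holds on `O = {x¹+x² ∈ I}` iff `γ''' = −((γ')² γ'' − μ γ (γ'')²)/(μ γ γ')` on `I`. -/
theorem statement17 (μ : ℝ) (hμ : μ ≠ 0) (I : Set ℝ) (hIopen : IsOpen I)
    (hIinterval : I.OrdConnected) (γ : ℝ → ℝ) (hγ : ContDiffOn ℝ ∞ γ I)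
    (hγ0 : ∀ t ∈ I, γ t ≠ 0) (hγ1 : ∀ t ∈ I, deriv γ t ≠ 0)
    (φ : (Fin 2 → ℝ) → ℝ) (hφ : φ = fun x => γ (x 0 + x 1)) :
    (∀ x ∈ {y : Fin 2 → ℝ | y 0 + y 1 ∈ I}, 0 = (1 / 2) * μ * φ x
          * (pd 1 (pd 1 (pd 0 φ)) x / pd 1 φ x + pd 1 (pd 0 (pd 0 φ)) x / pd 0 φ x)
        + pd 1 (pd 0 φ) x * (1 - (1 / 2) * μ * φ x
          * (pd 1 (pd 1 φ) x / (pd 1 φ x) ^ 2 + pd 0 (pd 0 φ) x / (pd 0 φ x) ^ 2)))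
    ↔ (∀ t ∈ I, iteratedDeriv 3 γ t =
        -(((deriv γ t) ^ 2 * iteratedDeriv 2 γ t - μ * γ t * (iteratedDeriv 2 γ t) ^ 2)
          / (μ * γ t * deriv γ t))) := by
  subst hφ
  simp only [pd_ridge, Set.mem_ofPred_eq, iteratedDeriv_succ, iteratedDeriv_zero]
  constructor
  · intro h t ht
    have := h ![t, 0] (by simpa using ht)
    simp only [Matrix.cons_val_zero, Matrix.cons_val_one, add_zero] at this
    exact (ridge_pde_iff_ode hμ (hγ0 t ht) (hγ1 t ht)).1 this
  · intro h x hx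
    exact (ridge_pde_iff_ode hμ (hγ0 _ hx) (hγ1 _ hx)).2 (h _ hx)
end

section
/- Let U ⊆ ℝ² be open, let D be a torsion-free affine connection on U with smooth Christoffel symbols Γ_{ij}^k, and let T be the (1,1)-tensor field on U with constant components T₁² = 1 and T₁¹ = T₂¹ = T₂² = 0 (so T∂₁ = ∂₂ and T∂₂ = 0, and T² = 0). Then the covariant derivative (D_k T)_i^j := ∂_k T_i^j + Σ_l (Γ_{kl}^j T_i^l − Γ_{ki}^l T_l^j) vanishes identically for all i,j,k if and only if Γ₁₂¹ = 0, Γ₁₂² = Γ₁₁¹, Γ₂₂¹ = 0 and Γ₂₂² = 0 on U. Moreover, when these relations hold, the Ricci tensor of D satisfies ρ₁₁ = ∂₂Γ₁₁² − ∂₁Γ₁₁¹, ρ₁₂ = ∂₂Γ₁₁¹, ρ₂₁ = −∂₂Γ₁₁¹ and ρ₂₂ = 0; in particular its symmetric part is ρ_s = (∂₂Γ₁₁² − ∂₁Γ₁₁¹) dx¹⊗dx¹ and its antisymmetric part is ρ_a = ∂₂Γ₁₁¹ dx¹∧dx². -/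
/-!
The only nonzero component of `T` is `T₁² = 1`, so the sum defining `(D_k T)_i^j` collapses:
`(D_k T)_1^1 = Γ_{k2}^1`, `(D_k T)_1^2 = Γ_{k2}^2 − Γ_{k1}^1`, `(D_k T)_2^1 = 0` and
`(D_k T)_2^2 = −Γ_{k2}^1`. With `Γ_{12} = Γ_{21}`, their vanishing is the four stated relations.

For the Ricci tensor, the relations hold throughout the open set `U`, hence near each of its
points, so they may be differentiated there (`pd_congr_of_eqOn`). Once the derivatives and values
of the Christoffel symbols are substituted, all remaining quadratic terms cancel.
-/

open scoped ContDiff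

/-- Partial derivatives at a point of an open set depend only on the values on that set. -/
theorem pd_congr_of_eqOn {n : ℕ} {U : Set (Fin n → ℝ)} (hU : IsOpen U)
    {f g : (Fin n → ℝ) → ℝ} (h : Set.EqOn f g U) {x : Fin n → ℝ} (hx : x ∈ U) (i : Fin n) :
    pd i f x = pd i g x := by
  have hfg : f =ᶠ[nhds x] g := h.eventuallyEq_of_mem (hU.mem_nhds hx)
  simp only [pd, hfg.fderiv_eq]

theorem pd_eq_zero_of_eqOn {n : ℕ} {U : Set (Fin n → ℝ)} (hU : IsOpen U)
    {f : (Fin n → ℝ) → ℝ} (h : ∀ y ∈ U, f y = 0) {x : Fin n → ℝ} (hx : x ∈ U) (i : Fin n) :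
    pd i f x = 0 := by
  rw [pd_congr_of_eqOn (g := fun _ => 0) hU h hx i]
  simp [pd]

/-- on a surface, the nilpotent tensor `T` with `T∂₁ = ∂₂`, `T∂₂ = 0`
(components `T₁² = 1`, others `0`) is parallel iff `Γ₁₂¹ = 0`, `Γ₁₂² = Γ₁₁¹`,
`Γ₂₂¹ = 0`, `Γ₂₂² = 0`; and in that case `ρ₁₁ = ∂₂Γ₁₁² − ∂₁Γ₁₁¹`, `ρ₁₂ = ∂₂Γ₁₁¹`,
`ρ₂₁ = −∂₂Γ₁₁¹`, `ρ₂₂ = 0`, so `ρ_s = (∂₂Γ₁₁² − ∂₁Γ₁₁¹) dx¹⊗dx¹` and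
`ρ_a = ∂₂Γ₁₁¹ dx¹∧dx²`. -/
theorem statement18 (U : Set (Fin 2 → ℝ)) (hU : IsOpen U)
    (Γ : Fin 2 → Fin 2 → Fin 2 → (Fin 2 → ℝ) → ℝ)
    (hΓ : ∀ i j k, ContDiffOn ℝ ∞ (Γ i j k) U)
    (hΓsym : ∀ i j k, Γ i j k = Γ j i k)
    (T : Fin 2 → Fin 2 → ℝ)
    (hT : ∀ i j, T i j = if i = 0 ∧ j = 1 then 1 else 0) :
    ((∀ x ∈ U, ∀ k i j, (∑ l, (Γ k l j x * T i l - Γ k i l x * T l j)) = 0)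
      ↔ (∀ x ∈ U, Γ 0 1 0 x = 0 ∧ Γ 0 1 1 x = Γ 0 0 0 x ∧
            Γ 1 1 0 x = 0 ∧ Γ 1 1 1 x = 0)) ∧
    ((∀ x ∈ U, Γ 0 1 0 x = 0 ∧ Γ 0 1 1 x = Γ 0 0 0 x ∧
        Γ 1 1 0 x = 0 ∧ Γ 1 1 1 x = 0) →
      ∀ x ∈ U,
        ricciD Γ 0 0 x = pd 1 (Γ 0 0 1) x - pd 0 (Γ 0 0 0) x ∧
        ricciD Γ 0 1 x = pd 1 (Γ 0 0 0) x ∧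
        ricciD Γ 1 0 x = -(pd 1 (Γ 0 0 0) x) ∧
        ricciD Γ 1 1 x = 0 ∧
        ricciSymD Γ 0 0 x = pd 1 (Γ 0 0 1) x - pd 0 (Γ 0 0 0) x ∧
        ricciSymD Γ 0 1 x = 0 ∧ ricciSymD Γ 1 0 x = 0 ∧ ricciSymD Γ 1 1 x = 0 ∧
        (ricciD Γ 0 1 x - ricciD Γ 1 0 x) / 2 = pd 1 (Γ 0 0 0) x) := by
  have hs : ∀ k, Γ 1 0 k = Γ 0 1 k := fun k => hΓsym 1 0 k
  constructor
  · constructor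
    · intro h x hx
      have h000 := h x hx 0 0 0
      have h001 := h x hx 0 0 1
      have h100 := h x hx 1 0 0
      have h101 := h x hx 1 0 1
      simp [hT, hs] at h000 h001 h100 h101
      refine ⟨h000, ?_, h100, ?_⟩ <;> linarith
    · intro h x hx k i j
      obtain ⟨h1, h2, h3, h4⟩ := h x hx
      fin_cases k <;> fin_cases i <;> fin_cases j <;>
        simp [hT, hs, h1, h2, h3, h4]
  · intro h x hx
    obtain ⟨h1, h2, h3, h4⟩ := h x hx
    have d1 := pd_eq_zero_of_eqOn hU (fun y hy => (h y hy).1) hx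
    have d2 := pd_congr_of_eqOn hU (fun y hy => (h y hy).2.1) hx
    have d3 := pd_eq_zero_of_eqOn hU (fun y hy => (h y hy).2.2.1) hx
    have d4 := pd_eq_zero_of_eqOn hU (fun y hy => (h y hy).2.2.2) hx
    simp only [ricciSymD, ricciD, Fin.sum_univ_two, hs, h1, h2, h3, h4, d1, d2, d3, d4]
    refine ⟨?_, ?_, ?_, ?_, ?_, ?_, ?_, ?_, ?_⟩ <;> ring
end

section
/- Let U ⊆ ℝ² be open, let u and v be smooth functions of the variable x¹, and let D be the affine connection on U whose only nonzero Christoffel symbol is Γ₁₁² = u(x¹) + x² v(x¹). Let F be a smooth function of x¹ and set f̂(x¹,x²) = F(x¹), and let μ ∈ ℝ. Then f̂ satisfies the equation Hess^D_{ij} f̂ + 2 (ρ_s)_{ij} − μ (∂_i f̂)(∂_j f̂) = 0 on U for all i,j if and only if F satisfies the ordinary differential equation F''(x¹) − μ F'(x¹)² + 2 v(x¹) = 0. -/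
/-!
A function of `x¹` alone has no `∂₂`-derivative, and `∂₂ Γ₁₁² = v`, the single Christoffel symbol
being affine in `x²`. The quadratic terms of the Ricci tensor vanish because `Γ` takes values in
the span of `∂₂` and is zero when `∂₂` is an argument, and its trace `Γ_{kj}^k` vanishes for the
same reason. So the Ricci tensor is `v dx¹ ⊗ dx¹`. As `∂₂ f̂ = 0`, the Hessian of `f̂` is
`F'' dx¹ ⊗ dx¹`. Only the `(1,1)` component of the tensor equation is nontrivial, and it is
the ordinary differential equation.
-/

open scoped ContDiff

theorem pd_comp_fst (g : ℝ → ℝ) (hg : Differentiable ℝ g) (i : Fin 2) :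
    pd i (fun x : Fin 2 → ℝ => g (x 0)) = fun x => if i = 0 then deriv g (x 0) else 0 := by
  funext x
  have h0 : HasFDerivAt (fun x : Fin 2 → ℝ => x 0)
      (ContinuousLinearMap.proj (R := ℝ) (φ := fun _ : Fin 2 => ℝ) 0) x := hasFDerivAt_apply 0 x
  have h := (hg (x 0)).hasDerivAt.comp_hasFDerivAt x h0
  have h' : fderiv ℝ (fun x : Fin 2 → ℝ => g (x 0)) x = _ := h.fderiv
  simp only [pd, h']
  fin_cases i <;> simp

theorem pd_const_zero (i : Fin 2) : pd i (fun _ : Fin 2 → ℝ => (0 : ℝ)) = fun _ => 0 := by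
  funext x
  simp [pd]

theorem pd_snd_affine (u v : ℝ → ℝ) (hu : Differentiable ℝ u) (hv : Differentiable ℝ v) :
    pd 1 (fun x : Fin 2 → ℝ => u (x 0) + x 1 * v (x 0)) = fun x => v (x 0) := by
  funext x
  have h0 : HasFDerivAt (fun x : Fin 2 → ℝ => x 0)
      (ContinuousLinearMap.proj (R := ℝ) (φ := fun _ : Fin 2 => ℝ) 0) x := hasFDerivAt_apply 0 x
  have h1 : HasFDerivAt (fun x : Fin 2 → ℝ => x 1)
      (ContinuousLinearMap.proj (R := ℝ) (φ := fun _ : Fin 2 => ℝ) 1) x := hasFDerivAt_apply 1 x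
  have h := ((hu (x 0)).hasDerivAt.comp_hasFDerivAt x h0).add
    (h1.mul ((hv (x 0)).hasDerivAt.comp_hasFDerivAt x h0))
  have h' : fderiv ℝ (fun x : Fin 2 → ℝ => u (x 0) + x 1 * v (x 0)) x = _ := h.fderiv
  simp only [pd, h']
  simp

/-- for the connection with only nonzero Christoffel symbol
`Γ₁₁² = u(x¹) + x² v(x¹)` and `f̂(x¹,x²) = F(x¹)`, the equation
`Hess^D f̂ + 2 ρ_s − μ df̂ ⊗ df̂ = 0` holds on `U` iff `F'' − μ (F')² + 2v = 0`. -/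
theorem statement19 (U : Set (Fin 2 → ℝ)) (hU : IsOpen U)
    (u v : ℝ → ℝ) (hu : ContDiff ℝ ∞ u) (hv : ContDiff ℝ ∞ v)
    (Γ : Fin 2 → Fin 2 → Fin 2 → (Fin 2 → ℝ) → ℝ)
    (hΓ : ∀ i j k (x : Fin 2 → ℝ), Γ i j k x =
      if i = 0 ∧ j = 0 ∧ k = 1 then u (x 0) + x 1 * v (x 0) else 0)
    (F : ℝ → ℝ) (hF : ContDiff ℝ ∞ F) (μ : ℝ)
    (f : (Fin 2 → ℝ) → ℝ) (hf : f = fun x => F (x 0)) :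
    (∀ x ∈ U, ∀ i j,
      hessD Γ f i j x + 2 * ricciSymD Γ i j x - μ * pd i f x * pd j f x = 0)
    ↔ (∀ x ∈ U, deriv (deriv F) (x 0) - μ * (deriv F (x 0)) ^ 2 + 2 * v (x 0) = 0) := by
  have hF1 : Differentiable ℝ F := hF.differentiable (by simp)
  have hF2 : Differentiable ℝ (deriv F) :=
    (contDiff_infty_iff_deriv.1 hF).2.differentiable (by simp)
  have hG : ∀ i j k, Γ i j k = if i = 0 ∧ j = 0 ∧ k = 1
      then (fun x => u (x 0) + x 1 * v (x 0)) else fun _ => 0 := by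
    intro i j k
    funext x
    rw [hΓ]
    split_ifs <;> rfl
  have hpf0 : pd 0 f = fun x => deriv F (x 0) := by
    rw [hf, pd_comp_fst F hF1]
    simp
  have hpf1 : pd 1 f = fun _ => 0 := by
    rw [hf, pd_comp_fst F hF1]
    simp
  have hpp : pd 0 (fun x : Fin 2 → ℝ => deriv F (x 0)) = fun x => deriv (deriv F) (x 0) := by
    rw [pd_comp_fst _ hF2]
    simp
  have hpp1 : pd 1 (fun x : Fin 2 → ℝ => deriv F (x 0)) = fun _ => 0 := by
    rw [pd_comp_fst _ hF2]
    simp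
  have hv1 := pd_snd_affine u v (hu.differentiable (by simp)) (hv.differentiable (by simp))
  refine forall₂_congr fun x _ => ?_
  simp only [Fin.forall_fin_two, hessD, ricciSymD, ricciD, Fin.sum_univ_two, hG, hpf0, hpf1]
  simp [hpp, hpp1, hv1, pd_const_zero]
  constructor <;> intro h <;> linarith
end
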